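/- arXiv:1804.00367 — 2 statements merged into one kernel-verified Lean document; each statement's English description precedes it below -/
import Mathlib

section
/- Let (K,+) be a finite abelian group, Z a proper subset of K, and N = K \ Z. Suppose that |N| divides |K| and that every Z-independent sequence of distinct elements of K has length at most |K|/|N|. Then N is a coset of a subgroup of K. -/
open Function Set

/-- A sequence `α₁, …, α_t` in `K` is `Z`-independent if there are `ψ₁, …, ψ_t` in `K`
with `ψ_i + α_i ∉ Z` for all `i` and `ψ_i + α_j ∈ Z` for all `j < i`. -/
def ZIndepSeq {K : Type*} [AddCommGroup K] (Z : Set K) {t : ℕ} (α : Fin t → K) : Prop :=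
  ∃ ψ : Fin t → K, (∀ i, ψ i + α i ∉ Z) ∧ ∀ i j : Fin t, j < i → ψ i + α j ∈ Z

lemma zindep_injective {K : Type*} [AddCommGroup K] {Z : Set K} {t : ℕ} {α : Fin t → K}
    (h : ZIndepSeq Z α) : Function.Injective α := by
  obtain ⟨ψ, h1, h2⟩ := h
  intro i j hij
  rcases lt_trichotomy i j with h | h | h
  · exact absurd (hij ▸ h2 j i h) (h1 j)
  · exact h
  · exact absurd (hij.symm ▸ h2 i j h) (h1 i)

lemma ncard_translate {K : Type*} [AddCommGroup K] (N : Set K) (p : K) :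
    {x | p + x ∈ N}.ncard = N.ncard := by
  have : {x | p + x ∈ N} = (fun x => -p + x) '' N := by
    ext x
    simp
  rw [this]
  exact Set.ncard_image_of_injective _ (add_right_injective _)

/-- an independent sequence whose translates cover less than `t * |N|` elements -/
def Bad {K : Type*} [AddCommGroup K] (Z : Set K) (t : ℕ) : Prop :=
  ∃ α ψ : Fin t → K, (∀ i, ψ i + α i ∉ Z) ∧ (∀ i j : Fin t, j < i → ψ i + α j ∈ Z) ∧
    (⋃ i, {x | ψ i + x ∈ Zᶜ}).ncard < t * (Zᶜ : Set K).ncard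

lemma Bad.cons {K : Type*} [AddCommGroup K] [Fintype K] {Z : Set K} {t : ℕ} (h : Bad Z t)
    {n : K} (hn : n ∈ Zᶜ) (ht : t * (Zᶜ : Set K).ncard ≤ Fintype.card K) : Bad Z (t + 1) := by
  obtain ⟨α, ψ, h1, h2, h3⟩ := h
  obtain ⟨c, hc⟩ : ∃ c, c ∉ ⋃ i, {x | ψ i + x ∈ Zᶜ} := by
    by_contra! hcon
    rw [Set.eq_univ_of_forall hcon, Set.ncard_univ, Nat.card_eq_fintype_card] at h3
    omega
  simp only [Set.mem_iUnion, Set.mem_setOf_eq, Set.mem_compl_iff, not_exists, not_not] at hc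
  refine ⟨Fin.cons c α, Fin.cons (n - c) ψ, ?_, ?_, ?_⟩
  · intro i
    refine Fin.cases ?_ (fun i => ?_) i
    · simpa using hn
    · simpa using h1 i
  · intro i j
    refine Fin.cases ?_ (fun i => ?_) i
    · intro h; exact absurd h (Fin.not_lt_zero j)
    · refine Fin.cases ?_ (fun j => ?_) j
      · intro _; simpa using hc i
      · intro h; simpa using h2 i j (Fin.succ_lt_succ_iff.1 h)
  · have : (⋃ i, {x | (Fin.cons (n - c) ψ : Fin (t+1) → K) i + x ∈ Zᶜ}) =
        {x | (n - c) + x ∈ Zᶜ} ∪ ⋃ i, {x | ψ i + x ∈ Zᶜ} := by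
      ext x
      simp only [Set.mem_iUnion, Fin.exists_fin_succ, Set.mem_union, Set.mem_setOf_eq,
        Fin.cons_zero, Fin.cons_succ]
    rw [this]
    have hu := Set.ncard_union_le {x | (n - c) + x ∈ Zᶜ} (⋃ i, {x | ψ i + x ∈ Zᶜ})
    rw [ncard_translate] at hu
    rw [add_mul, one_mul]
    omega

/-- if `|N|` divides `|K|` and every `Z`-independent sequence of distinct
elements has length at most `|K|/|N|`, then `N = K \ Z` is a coset of a subgroup of `K`. -/
theorem stmt_8 {K : Type*} [AddCommGroup K] [Fintype K]
    (Z : Set K) (hZ : Z ≠ Set.univ)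
    (hdvd : (Zᶜ : Set K).ncard ∣ Fintype.card K)
    (hmax : ∀ (t : ℕ) (α : Fin t → K), Function.Injective α → ZIndepSeq Z α →
      t ≤ Fintype.card K / (Zᶜ : Set K).ncard) :
    ∃ (L : AddSubgroup K) (a : K), (Zᶜ : Set K) = (fun h => a + h) '' (L : Set K) := by
  obtain ⟨n, hn⟩ : ∃ n, n ∈ Zᶜ := Set.nonempty_compl.2 hZ
  have hbnd : ∀ t, Bad Z t → t ≤ Fintype.card K / (Zᶜ : Set K).ncard := by
    rintro t ⟨α, ψ, h1, h2, -⟩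
    exact hmax t α (zindep_injective ⟨ψ, h1, h2⟩) ⟨ψ, h1, h2⟩
  have hnobad : ∀ t, ¬ Bad Z t := by
    intro t ht
    have hall : ∀ k, Bad Z (t + k) := by
      intro k
      induction k with
      | zero => exact ht
      | succ k ih =>
        exact ih.cons hn ((Nat.mul_le_mul_right _ (hbnd _ ih)).trans (Nat.div_mul_le_self _ _))
    have := hbnd _ (hall (Fintype.card K / (Zᶜ : Set K).ncard + 1))
    omega
  have key : ∀ x y : K, y ∈ Zᶜ → x + y ∈ Zᶜ → ∀ z, x + z ∈ Zᶜ → z ∈ Zᶜ := by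
    intro x y hy hxy z hxz
    by_contra hz
    rw [Set.mem_compl_iff, not_not] at hz
    apply hnobad 2
    refine ⟨![z, y], ![x, 0], ?_, ?_, ?_⟩
    · intro i
      fin_cases i
      · simpa using hxz
      · simpa using hy
    · intro i j hij
      fin_cases i <;> fin_cases j <;> simp_all
    · have hU : (⋃ i, {w | (![x, 0] : Fin 2 → K) i + w ∈ Zᶜ}) = {w | x + w ∈ Zᶜ} ∪ Zᶜ := by
        ext w
        simp [Fin.exists_fin_two]
      rw [hU]
      have hi := Set.ncard_union_add_ncard_inter {w | x + w ∈ Zᶜ} Zᶜ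
      rw [ncard_translate] at hi
      have hp : 0 < ({w | x + w ∈ Zᶜ} ∩ Zᶜ).ncard :=
        (Set.ncard_pos (Set.toFinite _)).2 ⟨y, hxy, hy⟩
      omega
  have key' : ∀ x y : K, y ∈ Zᶜ → x + y ∈ Zᶜ → ∀ z, z ∈ Zᶜ → x + z ∈ Zᶜ := by
    intro x y hy hxy z hz
    exact key (-x) (x + y) hxy (by simpa using hy) (x + z) (by simpa using hz)
  refine ⟨{ carrier := {h | n + h ∈ Zᶜ}, zero_mem' := ?_, add_mem' := ?_, neg_mem' := ?_ }, n, ?_⟩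
  · intro a b ha hb
    have := key' a n hn (by rw [add_comm]; exact ha) (n + b) hb
    show n + (a + b) ∈ Zᶜ
    rwa [add_left_comm]
  · simpa using hn
  · intro a ha
    have := key a n hn (by rw [add_comm]; exact ha) (n + -a) (by simpa [add_left_comm] using hn)
    exact this
  · ext x
    constructor
    · intro hx
      exact ⟨-n + x, by simpa using hx, by simp⟩
    · rintro ⟨h, hh, rfl⟩
      exact hh
end

section
/- Let (G,+) be a finite abelian group and E a field of characteristic 0 or of characteristic p not dividing |G| containing a primitive N-th root of unity, N = exp(G). Then for every nonzero function f : G → E with Fourier transform f̂, |supp(f)| · |supp(f̂)| ≥ |G| + |supp(f)| − |H(supp(f))|, where H(supp(f)) = {g ∈ G : g + supp(f) = supp(f)} is the stabilizer of supp(f) in G. -/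
open Function Set

/-- The Fourier transform of `f : G → E`, `f̂(χ) = ∑_{x ∈ G} f(x) χ(-x)`. -/
def fourierTransform {G E : Type*} [AddCommGroup G] [Fintype G] [Field E]
    (f : G → E) (χ : AddChar G E) : E :=
  ∑ x, f x * χ (-x)

lemma aux_lin (G E : Type*) [AddCommGroup G] [Field E] :
    LinearIndependent E (fun χ : AddChar G E => (χ : G → E)) := by
  have h := linearIndependent_monoidHom (Multiplicative G) E
  exact h.comp (AddChar.toMonoidHomEquiv (A := G) (M := E)) (Equiv.injective _)

lemma aux_fin (G E : Type*) [AddCommGroup G] [Fintype G] [Field E] : Finite (AddChar G E) :=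
  (aux_lin G E).finite

lemma aux_inj {G E : Type*} [AddCommGroup G] [Fintype G] [Field E]
    (hroot : ∃ ζ : E, IsPrimitiveRoot ζ (AddMonoid.exponent G))
    (f : G → E) (hf : ∀ χ, fourierTransform f χ = 0) : f = 0 := by
  classical
  obtain ⟨ζ, hζ⟩ := hroot
  haveI : NeZero (AddMonoid.exponent G) := ⟨AddMonoid.exponent_ne_zero_of_finite⟩
  have hexp : Monoid.exponent (Multiplicative G) = AddMonoid.exponent G :=
    Monoid.exponent_multiplicative
  haveI : NeZero (Monoid.exponent (Multiplicative G)) := by rw [hexp]; infer_instance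
  haveI : HasEnoughRootsOfUnity E (Monoid.exponent (Multiplicative G)) := by
    rw [hexp]
    exact ⟨⟨ζ, hζ⟩, inferInstance⟩
  have hcard : Nat.card (Multiplicative G →* Eˣ) = Nat.card (Multiplicative G) :=
    Nat.card_congr
      (CommGroup.monoidHom_mulEquiv_of_hasEnoughRootsOfUnity (Multiplicative G) E).some.toEquiv
  have hlin := aux_lin G E
  have := aux_fin G E
  have hle : Nat.card G ≤ Nat.card (AddChar G E) := by
    have : Nat.card (Multiplicative G) = Nat.card G := rfl
    rw [← this, ← hcard]
    refine Nat.card_le_card_of_injective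
      (fun φ : Multiplicative G →* Eˣ =>
        AddChar.toMonoidHomEquiv.symm ((Units.coeHom E).comp φ)) ?_
    intro a b hab
    have := AddChar.toMonoidHomEquiv.symm.injective hab
    ext x
    exact DFunLike.congr_fun this x
  have := aux_fin G E
  haveI : Fintype (AddChar G E) := Fintype.ofFinite _
  have htop : Submodule.span E (Set.range (fun χ : AddChar G E => (χ : G → E))) = ⊤ := by
    apply hlin.span_eq_top_of_card_eq_finrank'
    apply le_antisymm
    · exact hlin.fintype_card_le_finrank
    · rw [Module.finrank_fintype_fun_eq_card, ← Nat.card_eq_fintype_card,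
        ← Nat.card_eq_fintype_card]
      exact hle
  let Λ : (G → E) →ₗ[E] E :=
    { toFun := fun φ => ∑ x, f x * φ (-x)
      map_add' := by intro a b; simp [mul_add, Finset.sum_add_distrib]
      map_smul' := by
        intro a b
        simp only [Pi.smul_apply, smul_eq_mul, RingHom.id_apply, Finset.mul_sum]
        exact Finset.sum_congr rfl fun _ _ => by ring }
  have hΛ : Λ = 0 := by
    apply LinearMap.ext_on_range (v := fun χ : AddChar G E => (χ : G → E)) htop
    intro χ
    exact hf χ
  funext y
  have h1 : Λ (Pi.single (-y) 1) = 0 := by rw [hΛ]; rfl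
  have h2 : Λ (Pi.single (-y) 1) = f y := by
    change ∑ x, f x * (Pi.single (-y) (1 : E) : G → E) (-x) = f y
    simp [Pi.single_apply]
  rw [← h2, h1]; rfl

lemma aux_shift {G E : Type*} [AddCommGroup G] [Fintype G] [Field E]
    (f : G → E) (g : G) (χ : AddChar G E) :
    fourierTransform (fun x => f (x - g)) χ = χ (-g) * fourierTransform f χ := by
  unfold fourierTransform
  rw [Finset.mul_sum, ← Equiv.sum_comp (Equiv.addRight g)]
  refine Finset.sum_congr rfl fun x _ => ?_
  simp only [Equiv.coe_addRight, add_sub_cancel_right, neg_add_rev, AddChar.map_add_eq_mul]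
  ring

lemma aux_rank {G E : Type*} [AddCommGroup G] [Fintype G] [Field E]
    (hroot : ∃ ζ : E, IsPrimitiveRoot ζ (AddMonoid.exponent G))
    (f : G → E) (T : Finset G)
    (hT : LinearIndepOn E (fun (g : G) (x : G) => f (x - g)) (T : Set G)) :
    T.card ≤ (Function.support (fourierTransform f)).ncard := by
  classical
  have := aux_fin G E
  haveI : Fintype (AddChar G E) := Fintype.ofFinite _
  let F : (G → E) →ₗ[E] (AddChar G E → E) :=
    { toFun := fourierTransform
      map_add' := by
        intro a b; funext χ; simp [fourierTransform, add_mul, Finset.sum_add_distrib]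
      map_smul' := by
        intro a b; funext χ; simp [fourierTransform, Finset.mul_sum, mul_assoc] }
  have hF : LinearMap.ker F = ⊥ := by
    rw [LinearMap.ker_eq_bot']
    intro m hm
    exact aux_inj hroot m fun χ => congrFun hm χ
  have h1 := LinearIndependent.map' hT F hF
  set B : Finset (AddChar G E) := Finset.univ.filter fun χ => fourierTransform f χ ≠ 0 with hB
  have hBc : (Function.support (fourierTransform f)).ncard = B.card := by
    rw [← Set.ncard_coe_finset]; congr 1; ext χ; simp [hB]
  rw [hBc]
  let W := Submodule.span E
    ((B.image fun χ => (Pi.single χ (1 : E) : AddChar G E → E) : Finset _) : Set (AddChar G E → E))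
  have h2 := finrank_span_eq_card h1
  have h3 : Submodule.span E (Set.range (F ∘ fun t : (T : Set G) => fun x => f (x - t))) ≤ W := by
    rw [Submodule.span_le]
    rintro _ ⟨t, rfl⟩
    have : (F ∘ fun t : (T : Set G) => fun x => f (x - t)) t =
        ∑ χ ∈ B, (F (fun x => f (x - t)) χ) • (Pi.single χ (1 : E) : AddChar G E → E) := by
      funext ψ
      have h4 : F (fun x => f (x - t)) ψ = ψ (-t) * fourierTransform f ψ := aux_shift f t ψ
      simp only [Function.comp, Finset.sum_apply, Pi.smul_apply, Pi.single_apply, smul_eq_mul,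
        mul_ite, mul_one, mul_zero, Finset.sum_ite_eq]
      split_ifs with h
      · rfl
      · have : fourierTransform f ψ = 0 := by simpa [hB] using h
        rw [h4, this, mul_zero]
    rw [this]
    refine Submodule.sum_mem _ fun χ hχ => Submodule.smul_mem _ _ (Submodule.subset_span ?_)
    simp only [Finset.coe_image]
    exact ⟨χ, hχ, rfl⟩
  have h4 := Submodule.finrank_mono h3
  have h5 : Module.finrank E W ≤ B.card :=
    (finrank_span_finset_le_card _).trans Finset.card_image_le
  have h6 : Fintype.card (T : Set G) = T.card := by simp
  have h7 : Module.finrank E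
    (Submodule.span E (Set.range (F ∘ fun t : (T : Set G) => fun x => f (x - t)))) = T.card :=
    h2.trans h6
  omega

lemma aux_insert {G E : Type*} [AddCommGroup G] [Field E]
    (f : G → E) (T : Set G) (p y : G)
    (hT : LinearIndepOn E (fun (g : G) (x : G) => f (x - g)) T)
    (hp : f (y - p) ≠ 0) (hy : ∀ t ∈ T, f (y - t) = 0) :
    LinearIndepOn E (fun (g : G) (x : G) => f (x - g)) (insert p T) := by
  refine hT.insert ?_
  intro hmem
  have : Submodule.span E ((fun (g : G) (x : G) => f (x - g)) '' T) ≤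
      LinearMap.ker (LinearMap.proj y : (G → E) →ₗ[E] E) := by
    rw [Submodule.span_le]
    rintro _ ⟨t, ht, rfl⟩
    exact hy t ht
  exact hp (this hmem)

lemma aux_greedy {G E : Type*} [AddCommGroup G] [Field E]
    (f : G → E) (P : Finset G) :
    ∃ T : Finset G, T ⊆ P ∧
      LinearIndepOn E (fun (g : G) (x : G) => f (x - g)) (T : Set G) ∧
      ∀ p ∈ P, ∀ x, f (x - p) ≠ 0 → ∃ t ∈ T, f (x - t) ≠ 0 := by
  classical
  induction P using Finset.induction_on with
  | empty => exact ⟨∅, by simp, by simp, by simp⟩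
  | insert p P _ ih =>
    obtain ⟨T, hTP, hT, hc⟩ := ih
    by_cases h : ∀ x, f (x - p) ≠ 0 → ∃ t ∈ T, f (x - t) ≠ 0
    · refine ⟨T, hTP.trans (Finset.subset_insert _ _), hT, ?_⟩
      intro q hq
      rcases Finset.mem_insert.1 hq with rfl | hq
      · exact h
      · exact hc q hq
    · push Not at h
      obtain ⟨y, hy, hy'⟩ := h
      refine ⟨insert p T, Finset.insert_subset_insert _ hTP, ?_, ?_⟩
      · rw [Finset.coe_insert]
        exact aux_insert f T p y hT hy hy'
      · intro q hq x hx
        rcases Finset.mem_insert.1 hq with rfl | hq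
        · exact ⟨q, Finset.mem_insert_self _ _, hx⟩
        · obtain ⟨t, ht, h⟩ := hc q hq x hx
          exact ⟨t, Finset.mem_insert_of_mem ht, h⟩

/-- the dual sharpened Donoho–Stark uncertainty principle:
`|supp f|·|supp f̂| ≥ |G| + |supp f| - |H(supp f)|`, where `H(supp f)` is the stabilizer
of `supp f` in `G`. -/
theorem stmt_18 {G E : Type*} [AddCommGroup G] [Fintype G] [Field E]
    (hchar : (Fintype.card G : E) ≠ 0)
    (hroot : ∃ ζ : E, IsPrimitiveRoot ζ (AddMonoid.exponent G))
    (f : G → E) (hf : f ≠ 0) :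
    (Fintype.card G : ℤ) + (Function.support f).ncard -
        ({g : G | (fun x => g + x) '' Function.support f = Function.support f} : Set G).ncard ≤
      ((Function.support f).ncard : ℤ) * (Function.support (fourierTransform f)).ncard := by
  classical
  obtain ⟨a, ha⟩ := Function.ne_iff.1 hf
  have ha : f a ≠ 0 := ha
  obtain ⟨T, hTP, hT, hc⟩ := aux_greedy f (Finset.univ.filter fun g => f (-g) = 0)
  have hT0 : ∀ t ∈ T, f (0 - t) = 0 := by
    intro t ht
    simpa using hTP ht
  have ha0 : f (0 - (-a)) ≠ 0 := by simpa using ha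
  have hnot : -a ∉ T := fun h => ha0 (hT0 _ h)
  have hT' := aux_insert f T (-a) 0 hT ha0 hT0
  rw [← Finset.coe_insert] at hT'
  have hr := aux_rank hroot f _ hT'
  rw [Finset.card_insert_of_notMem hnot] at hr
  set A : Finset G := Finset.univ.filter fun x => f x ≠ 0 with hA
  have hAs : Function.support f = (A : Set G) := by ext x; simp [hA]
  set H : Set G := {g : G | (fun x => g + x) '' Function.support f = Function.support f} with hH
  set Hf : Finset G := H.toFinset with hHf
  have hHc : H.ncard = Hf.card := Set.ncard_eq_toFinset_card' H
  have hcover : (Finset.univ : Finset G) ⊆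
      Hf ∪ T.biUnion fun t => A.image fun x => t + x := by
    intro y _
    rw [Finset.mem_union]
    by_cases h : ∃ t ∈ T, f (y - t) ≠ 0
    · right
      obtain ⟨t, ht, h⟩ := h
      refine Finset.mem_biUnion.2 ⟨t, ht, Finset.mem_image.2 ⟨y - t, ?_, by abel⟩⟩
      simpa [hA] using h
    · left
      have key : ∀ g, f (-g) = 0 → f (y - g) = 0 := by
        intro g hg
        by_contra hne
        exact h (hc g (by simpa using hg) y hne)
      rw [hHf, Set.mem_toFinset, hH, Set.mem_setOf_eq, hAs]
      have hsub : A ⊆ A.image fun x => y + x := by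
        intro z hz
        refine Finset.mem_image.2 ⟨z - y, ?_, by abel⟩
        simp only [hA, Finset.mem_filter, Finset.mem_univ, true_and] at hz ⊢
        intro h0
        apply hz
        have := key (y - z) (by simpa using h0)
        simpa using this
      have := Finset.eq_of_subset_of_card_le hsub Finset.card_image_le
      conv_rhs => rw [this]
      rw [Finset.coe_image]
  have hcard := Finset.card_le_card hcover
  have h1 : (T.biUnion fun t => A.image fun x => t + x).card ≤ T.card * A.card :=
    Finset.card_biUnion_le_card_mul _ _ _ fun _ _ => Finset.card_image_le
  have h2 := Finset.card_union_le Hf (T.biUnion fun t => A.image fun x => t + x)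
  rw [Finset.card_univ] at hcard
  have h3 : (Function.support f).ncard = A.card := by rw [hAs, Set.ncard_coe_finset]
  rw [hHc, h3]
  have h4 := Nat.mul_le_mul_left A.card hr
  have h5 : Fintype.card G + A.card ≤
      A.card * (Function.support (fourierTransform f)).ncard + Hf.card := by
    nlinarith
  have h6 : (Fintype.card G : ℤ) + A.card ≤
      A.card * (Function.support (fourierTransform f)).ncard + Hf.card := by exact_mod_cast h5
  linarith
end
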